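/- Let s_1 and s_2 be binary strings with |s̃_1| < |s̃_2|. Then the condensation s̃_2 is a mean of s_1 and s_2; that is, dtw(s_1, s̃_2)² + dtw(s_2, s̃_2)² ≤ dtw(s_1, z)² + dtw(s_2, z)² for every binary string z, and moreover dtw(s_2, s̃_2) = 0, so F(s̃_2) = dtw(s_1, s̃_2)². -/

import Mathlib

/-- One step of a warping path: move down, right, or diagonally. -/
def wpStep (a b : ℕ × ℕ) : Prop :=
  (b.1 = a.1 + 1 ∧ b.2 = a.2) ∨ (b.1 = a.1 ∧ b.2 = a.2 + 1) ∨
    (b.1 = a.1 + 1 ∧ b.2 = a.2 + 1)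

/-- A warping path of order `m × n` (0-based indices). -/
def IsWarpingPath (m n : ℕ) (p : List (ℕ × ℕ)) : Prop :=
  p.head? = some (0, 0) ∧ p.getLast? = some (m - 1, n - 1) ∧
    List.Chain' wpStep p ∧ ∀ q ∈ p, q.1 < m ∧ q.2 < n

/-- The cost of aligning binary strings `x` and `y` along path `p`:
the number of aligned mismatching pairs (for binary symbols,
`(x[i] - y[j])^2` is `0` if the symbols agree and `1` otherwise). -/
def pathCost (x y : List Bool) (p : List (ℕ × ℕ)) : ℕ :=
  (p.map fun q => if x.getD q.1 false = y.getD q.2 false then 0 else 1).sum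

/-- The squared dynamic time warping distance `dtw(x,y)²` of two binary strings. -/
noncomputable def dtwSq (x y : List Bool) : ℕ :=
  sInf {c | ∃ p, IsWarpingPath x.length y.length p ∧ pathCost x y p = c}

/-- The dynamic time warping distance `dtw(x,y)`. -/
noncomputable def dtw (x y : List Bool) : ℝ :=
  Real.sqrt (dtwSq x y)

/-- The condensation of a binary string: collapse every maximal run of equal
consecutive symbols to a single symbol. -/
def condense : List Bool → List Bool
  | [] => []
  | [a] => [a]
  | a :: b :: rest => if a = b then condense (b :: rest) else a :: condense (b :: rest)

/-- Auxiliary function collecting the block sizes of a binary string. -/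
def blockSizesAux : Bool → ℕ → List Bool → List ℕ
  | _, cnt, [] => [cnt]
  | cur, cnt, a :: rest =>
      if a = cur then blockSizesAux cur (cnt + 1) rest
      else cnt :: blockSizesAux a 1 rest

/-- The list of block sizes of a binary string (sizes of the maximal runs
of equal consecutive symbols, from left to right). -/
def blockSizes : List Bool → List ℕ
  | [] => []
  | a :: rest => blockSizesAux a 1 rest

/-- The objective `F(z) = Σᵢ dtw(sᵢ, z)²`. -/
noncomputable def Fobj (ss : List (List Bool)) (z : List Bool) : ℕ :=
  (ss.map fun s => dtwSq s z).sum

/-- `z` is a mean of the strings `ss`: a nonempty binary string minimizing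
`F` among all nonempty binary strings. -/
def IsMean (ss : List (List Bool)) (z : List Bool) : Prop :=
  z ≠ [] ∧ ∀ w : List Bool, w ≠ [] → Fobj ss z ≤ Fobj ss w

/-- The optimal value of a Min 1-Separated Sum instance with integers `b`
(1-based indexing) and selection size `r`: minimize the sum of `r` selected
integers, no two of which are consecutive. -/
noncomputable def mssValue (b : List ℕ) (r : ℕ) : ℕ :=
  sInf {s | ∃ I : List ℕ, I.length = r ∧ (∀ i ∈ I, 1 ≤ i ∧ i ≤ b.length) ∧
    List.Chain' (fun a c => a + 2 ≤ c) I ∧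
    (I.map fun i => b.getD (i - 1) 0).sum = s}

def dd (a b : Bool) : ℕ := if a = b then 0 else 1

inductive WW : List Bool → List Bool → ℕ → Prop
  | base (a b : Bool) : WW [a] [b] (dd a b)
  | down (a a2 b : Bool) (xs ys : List Bool) (c : ℕ) : WW (a2 :: xs) (b :: ys) c →
      WW (a :: a2 :: xs) (b :: ys) (dd a b + c)
  | right (a b b2 : Bool) (xs ys : List Bool) (c : ℕ) : WW (a :: xs) (b2 :: ys) c →
      WW (a :: xs) (b :: b2 :: ys) (dd a b + c)
  | diag (a a2 b b2 : Bool) (xs ys : List Bool) (c : ℕ) : WW (a2 :: xs) (b2 :: ys) c →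
      WW (a :: a2 :: xs) (b :: b2 :: ys) (dd a b + c)

lemma blk_cons (a a2 : Bool) (xs : List Bool) :
    (condense (a :: a2 :: xs)).length = dd a a2 + (condense (a2 :: xs)).length := by
  rw [condense, dd]
  split_ifs <;> simp [add_comm]

lemma last_cons (a a2 : Bool) (xs : List Bool) :
    (a :: a2 :: xs).getLastD false = (a2 :: xs).getLastD false := by
  simp [List.getLastD_eq_getLast?]

lemma dd_tri (a b c : Bool) : dd a c ≤ dd a b + dd b c := by
  revert a b c; decide

lemma WW.lower {x y : List Bool} {c : ℕ} (h : WW x y c) :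
    (condense x).length + dd (x.headD false) (y.headD false)
        + dd (x.getLastD false) (y.getLastD false) ≤ (condense y).length + 2 * c ∧
    (condense y).length + dd (x.headD false) (y.headD false)
        + dd (x.getLastD false) (y.getLastD false) ≤ (condense x).length + 2 * c := by
  induction h with
  | base a b => simp [condense, List.getLastD]; omega
  | down a a2 b xs ys c h ih =>
    rw [blk_cons, last_cons]
    simp only [List.headD_cons] at ih ⊢
    obtain ⟨i1, i2⟩ := ih
    have : dd a a2 + dd a b ≤ dd a2 b + 2 * dd a b ∧ dd a b ≤ dd a a2 + dd a2 b + 2 * dd a b := by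
      clear i1 i2 h
      revert a a2 b; decide
    omega
  | right a b b2 xs ys c h ih =>
    rw [blk_cons, last_cons]
    simp only [List.headD_cons] at ih ⊢
    obtain ⟨i1, i2⟩ := ih
    have : dd b b2 + dd a b ≤ dd a b2 + 2 * dd a b := by
      clear i1 i2 h
      revert a b b2; decide
    omega
  | diag a a2 b b2 xs ys c h ih =>
    rw [blk_cons, blk_cons, last_cons, last_cons]
    simp only [List.headD_cons] at ih ⊢
    obtain ⟨i1, i2⟩ := ih
    have : dd a a2 + dd a b ≤ dd b b2 + dd a2 b2 + 2 * dd a b ∧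
        dd b b2 + dd a b ≤ dd a a2 + dd a2 b2 + 2 * dd a b := by
      clear i1 i2 h
      revert a a2 b b2; decide
    omega

lemma blk_pos (a : Bool) (xs : List Bool) : 1 ≤ (condense (a :: xs)).length := by
  induction xs generalizing a with
  | nil => simp [condense]
  | cons b xs ih => rw [blk_cons]; have := ih b; omega

lemma upper_eq : ∀ (n : ℕ) (a : Bool) (xs ys : List Bool), xs.length + ys.length = n →
    List.IsChain (· ≠ ·) (a :: ys) → (condense (a :: xs)).length ≤ (a :: ys).length →
    ∃ c, WW (a :: xs) (a :: ys) c ∧ 2 * c + (condense (a :: xs)).length ≤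
      (a :: ys).length + dd ((a :: xs).getLastD false) ((a :: ys).getLastD false) := by
  intro n
  induction n using Nat.strong_induction_on with
  | _ n ih =>
  intro a xs ys hn hc hl
  match xs, ys with
  | [], [] => exact ⟨_, WW.base a a, by simp [condense, dd]⟩
  | [], [b] =>
    have hab : a ≠ b := by simpa using hc
    refine ⟨_, WW.right a a b [] [] _ (WW.base a b), ?_⟩
    simp [condense, dd, hab, List.getLastD]
  | [], b :: b2 :: ys =>
    have hab : a ≠ b ∧ b ≠ b2 := by
      simp only [List.isChain_cons_cons] at hc; exact ⟨hc.1, hc.2.1⟩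
    have e : b2 = a := by
      clear hc hl hn
      cases a <;> cases b <;> cases b2 <;> simp_all
    subst e
    obtain ⟨c, hw, hi⟩ := ih (ys.length) (by simp at hn; omega) b2 [] ys (by simp)
      (by simp only [List.isChain_cons_cons] at hc; exact hc.2.2) (by simp [condense])
    refine ⟨_, WW.right _ _ _ _ _ _ (WW.right _ _ _ _ _ _ hw), ?_⟩
    rw [last_cons b2 b, last_cons b b2]
    have h1 : dd b2 b ≤ 1 := by unfold dd; split_ifs <;> simp
    have h2 : dd b2 b2 = 0 := by simp [dd]
    simp only [List.length_cons] at *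
    omega
  | a2 :: xs, ys =>
    by_cases h : a = a2
    · subst h
      have hb := blk_cons a a xs
      have h2 : dd a a = 0 := by simp [dd]
      obtain ⟨c, hw, hi⟩ := ih (xs.length + ys.length) (by simp at hn; omega) a xs ys rfl hc
        (by omega)
      refine ⟨_, WW.down _ _ _ _ _ _ hw, ?_⟩
      rw [last_cons]
      omega
    · have hb := blk_cons a a2 xs
      have hp := blk_pos a2 xs
      have h2 : dd a a2 = 1 := by simp [dd, h]
      match ys with
      | [] => simp only [List.length_cons, List.length_nil] at hl; omega
      | b :: ys =>
        simp only [List.isChain_cons_cons] at hc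
        have e : b = a2 := by
          have := hc.1
          cases a <;> cases a2 <;> cases b <;> simp_all
        subst e
        simp only [List.length_cons] at hl hn
        obtain ⟨c, hw, hi⟩ := ih (xs.length + ys.length) (by omega) b xs ys rfl hc.2 (by simp only [List.length_cons]; omega)
        refine ⟨_, WW.diag _ _ _ _ _ _ _ hw, ?_⟩
        have h3 : dd a a = 0 := by simp [dd]
        rw [last_cons, last_cons]
        simp only [List.length_cons] at hi ⊢
        omega

lemma upper (x y : List Bool) (hx : x ≠ []) (hc : List.IsChain (· ≠ ·) y)
    (hl : (condense x).length < y.length) :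
    ∃ c, WW x y c ∧ 2 * c + (condense x).length ≤
      y.length + dd (x.headD false) (y.headD false)
        + dd (x.getLastD false) (y.getLastD false) := by
  match x, y with
  | [], _ => exact absurd rfl hx
  | _, [] => simp at hl
  | a :: xs, b :: ys =>
    by_cases h : a = b
    · subst h
      obtain ⟨c, hw, hi⟩ := upper_eq _ a xs ys rfl hc hl.le
      exact ⟨c, hw, by omega⟩
    · have hp := blk_pos a xs
      match ys with
      | [] => simp only [List.length_cons, List.length_nil] at hl; omega
      | b2 :: ys =>
        simp only [List.isChain_cons_cons] at hc
        have e : b2 = a := by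
          have := hc.1
          cases a <;> cases b2 <;> cases b <;> simp_all
        subst e
        simp only [List.length_cons] at hl
        obtain ⟨c, hw, hi⟩ := upper_eq _ b2 xs ys rfl hc.2 (by simp only [List.length_cons]; omega)
        refine ⟨_, WW.right _ _ _ _ _ _ hw, ?_⟩
        have h3 : dd b2 b = 1 := by simp [dd, h]
        rw [last_cons]
        simp only [List.length_cons, List.headD_cons] at *
        omega

lemma cond_head (a : Bool) (xs : List Bool) : ∃ ys, condense (a :: xs) = a :: ys := by
  induction xs generalizing a with
  | nil => exact ⟨[], rfl⟩
  | cons b xs ih =>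
    rw [condense]
    split_ifs with h
    · subst h; exact ih a
    · exact ⟨_, rfl⟩

lemma cond_chain (x : List Bool) : List.IsChain (· ≠ ·) (condense x) := by
  induction x using condense.induct with
  | case1 => simp [condense]
  | case2 a => simp [condense]
  | case3 b rest ih => rw [condense]; simpa using ih
  | case4 a b rest h ih =>
    rw [condense, if_neg h]
    obtain ⟨ys, e⟩ := cond_head b rest
    rw [e] at ih ⊢
    simp only [List.isChain_cons_cons]
    exact ⟨h, ih⟩

lemma cond_last (x : List Bool) : (condense x).getLastD false = x.getLastD false := by
  induction x using condense.induct with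
  | case1 => simp [condense]
  | case2 a => simp [condense]
  | case3 b rest ih => rw [condense, last_cons]; simpa using ih
  | case4 a b rest h ih =>
    rw [condense, if_neg h, last_cons, ← ih]
    obtain ⟨ys, e⟩ := cond_head b rest
    rw [e, last_cons]

lemma WW.path {x y : List Bool} {c : ℕ} (h : WW x y c) :
    ∃ p, IsWarpingPath x.length y.length p ∧ pathCost x y p = c := by
  have key : ∀ (x y x' y' : List Bool) (c : ℕ) (u v : ℕ) (p : List (ℕ × ℕ)),
      wpStep (0, 0) (u, v) → x.length = x'.length + u → y.length = y'.length + v →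
      1 ≤ x'.length → 1 ≤ y'.length →
      (∀ i, x.getD (i + u) false = x'.getD i false) →
      (∀ i, y.getD (i + v) false = y'.getD i false) →
      IsWarpingPath x'.length y'.length p → pathCost x' y' p = c →
      ∃ p, IsWarpingPath x.length y.length p ∧
        pathCost x y p = dd (x.getD 0 false) (y.getD 0 false) + c := by
    intro x y x' y' c u v p hs hx hy hx1 hy1 gx gy hp hc
    obtain ⟨h1, h2, h3, h4⟩ := hp
    refine ⟨(0, 0) :: p.map (fun q => (q.1 + u, q.2 + v)), ⟨rfl, ?_, ?_, ?_⟩, ?_⟩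
    · rw [List.getLast?_cons, List.getLast?_map, h2]
      simp; omega
    · show List.IsChain _ _
      rw [List.isChain_cons]
      refine ⟨?_, ?_⟩
      · intro q hq
        rw [List.head?_map, h1] at hq
        simp at hq
        rw [← hq]; exact hs
      · rw [List.isChain_map]
        refine List.IsChain.imp ?_ h3
        intro a b hab
        simp only [wpStep] at hab ⊢
        omega
    · intro q hq
      rcases List.mem_cons.1 hq with rfl | hq
      · simp; omega
      · obtain ⟨r, hr, rfl⟩ := List.mem_map.1 hq
        have := h4 r hr
        simp; omega
    · rw [← hc]
      simp only [pathCost, List.map_cons, List.sum_cons, List.map_map, dd]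
      congr 2
      apply List.map_congr_left
      intro q _
      simp only [Function.comp, gx, gy]
  induction h with
  | base a b =>
    refine ⟨[(0, 0)], ⟨rfl, rfl, ?_, ?_⟩, ?_⟩
    · exact List.isChain_singleton _
    · simp
    · simp [pathCost, dd]
  | down a a2 b xs ys c h ih =>
    obtain ⟨p, hp, hc⟩ := ih
    exact key _ _ _ _ c 1 0 p (by simp [wpStep]) (by simp) (by simp) (by simp) (by simp)
      (by simp) (by simp) hp hc
  | right a b b2 xs ys c h ih =>
    obtain ⟨p, hp, hc⟩ := ih
    exact key _ _ _ _ c 0 1 p (by simp [wpStep]) (by simp) (by simp) (by simp) (by simp)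
      (by simp) (by simp) hp hc
  | diag a a2 b b2 xs ys c h ih =>
    obtain ⟨p, hp, hc⟩ := ih
    exact key _ _ _ _ c 1 1 p (by simp [wpStep]) (by simp) (by simp) (by simp) (by simp)
      (by simp) (by simp) hp hc

lemma drop_getD (x : List Bool) (i : ℕ) (h : i < x.length) :
    x.drop i = x.getD i false :: x.drop (i + 1) := by
  rw [List.drop_eq_getElem_cons h]
  simp [h]

lemma path_WW_aux (x y : List Bool) (p : List (ℕ × ℕ)) : ∀ q : ℕ × ℕ,
    (q :: p).getLast? = some (x.length - 1, y.length - 1) → List.IsChain wpStep (q :: p) →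
    (∀ r ∈ q :: p, r.1 < x.length ∧ r.2 < y.length) →
    WW (x.drop q.1) (y.drop q.2) (pathCost x y (q :: p)) := by
  induction p with
  | nil =>
    intro q h1 h2 h3
    simp at h1
    have := h3 q (by simp)
    have e1 : q.1 + 1 = x.length := by rw [h1]; simp; omega
    have e2 : q.2 + 1 = y.length := by rw [h1]; simp; omega
    rw [drop_getD x _ this.1, drop_getD y _ this.2, e1, e2]
    simp only [List.drop_length, pathCost, List.map_cons, List.map_nil, List.sum_cons, List.sum_nil]
    exact WW.base _ _
  | cons r p ih =>
    intro q h1 h2 h3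
    have hq := h3 q (by simp)
    have hr := h3 r (by simp)
    rw [List.isChain_cons_cons] at h2
    have h := ih r (by simpa using h1) h2.2 (fun s hs => h3 s (by simp [hs]))
    have e : pathCost x y (q :: r :: p) =
      dd (x.getD q.1 false) (y.getD q.2 false) + pathCost x y (r :: p) := by
      simp [pathCost, dd]
    rw [e]
    rw [drop_getD x _ hr.1, drop_getD y _ hr.2] at h
    rcases h2.1 with ⟨u, v⟩ | ⟨u, v⟩ | ⟨u, v⟩
    · rw [drop_getD x _ hq.1, ← u, drop_getD x _ hr.1, ← v, drop_getD y _ hr.2]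
      exact WW.down _ _ _ _ _ _ h
    · rw [drop_getD y _ hq.2, ← v, drop_getD y _ hr.2, ← u, drop_getD x _ hr.1]
      exact WW.right _ _ _ _ _ _ h
    · rw [drop_getD y _ hq.2, ← v, drop_getD y _ hr.2, drop_getD x _ hq.1, ← u, drop_getD x _ hr.1]
      exact WW.diag _ _ _ _ _ _ _ h

lemma path_WW (x y : List Bool) (p : List (ℕ × ℕ)) (hp : IsWarpingPath x.length y.length p) :
    WW x y (pathCost x y p) := by
  obtain ⟨h1, h2, h3, h4⟩ := hp
  match p with
  | [] => simp at h1
  | q :: p =>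
    have := path_WW_aux x y p q h2 h3 h4
    simp at h1
    subst h1
    simpa using this

lemma WW_exists (a b : Bool) (xs ys : List Bool) : ∃ c, WW (a :: xs) (b :: ys) c := by
  induction xs generalizing a with
  | nil =>
    induction ys generalizing b with
    | nil => exact ⟨_, WW.base _ _⟩
    | cons b2 ys ih => obtain ⟨c, h⟩ := ih b2; exact ⟨_, WW.right _ _ _ _ _ _ h⟩
  | cons a2 xs ih => obtain ⟨c, h⟩ := ih a2; exact ⟨_, WW.down _ _ _ _ _ _ h⟩

lemma dtw_WW (x y : List Bool) (hx : x ≠ []) (hy : y ≠ []) : WW x y (dtwSq x y) := by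
  have hne : {c | ∃ p, IsWarpingPath x.length y.length p ∧ pathCost x y p = c}.Nonempty := by
    match x, y with
    | [], _ => exact absurd rfl hx
    | _, [] => exact absurd rfl hy
    | a :: xs, b :: ys =>
      obtain ⟨c, h⟩ := WW_exists a b xs ys
      exact ⟨c, h.path⟩
  obtain ⟨p, hp, hc⟩ := Nat.sInf_mem hne
  have := path_WW x y p hp
  rw [hc] at this
  exact this

lemma dtw_le {x y : List Bool} {c : ℕ} (h : WW x y c) : dtwSq x y ≤ c :=
  Nat.sInf_le h.path

/-- if `|s̃₁| < |s̃₂|`, then the condensation `s̃₂` is a mean of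
`s₁` and `s₂`, with `dtw(s₂, s̃₂) = 0` and hence `F(s̃₂) = dtw(s₁, s̃₂)²`. -/
theorem condensation_is_mean_of_two (s1 s2 : List Bool)
    (h1 : s1 ≠ []) (h2 : s2 ≠ [])
    (hlt : (condense s1).length < (condense s2).length) :
    IsMean [s1, s2] (condense s2) ∧
    (∀ z : List Bool, z ≠ [] →
      dtwSq s1 (condense s2) + dtwSq s2 (condense s2) ≤ dtwSq s1 z + dtwSq s2 z) ∧
    dtw s2 (condense s2) = 0 ∧
    Fobj [s1, s2] (condense s2) = dtwSq s1 (condense s2) := by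
  have hz : dtwSq s2 (condense s2) = 0 := by
    match s2, h2 with
    | a :: xs, _ =>
      obtain ⟨ys, e⟩ := cond_head a xs
      have hc := cond_chain (a :: xs)
      have hl := cond_last (a :: xs)
      rw [e] at hc hl
      obtain ⟨c, hw, hi⟩ := upper_eq _ a xs ys rfl hc (by rw [e])
      rw [hl, e] at hi
      have := dtw_le hw
      rw [e]
      simp [dd] at hi
      omega
  have hne : condense s2 ≠ [] := by
    intro h; rw [h] at hlt; simp at hlt
  have hhd : (condense s2).headD false = s2.headD false := by
    match s2, h2 with
    | a :: xs, _ => obtain ⟨ys, e⟩ := cond_head a xs; rw [e]; rfl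
  have main : ∀ z : List Bool, z ≠ [] →
      dtwSq s1 (condense s2) + dtwSq s2 (condense s2) ≤ dtwSq s1 z + dtwSq s2 z := by
    intro z hzne
    obtain ⟨c, hw, hi⟩ := upper s1 (condense s2) h1 (cond_chain s2) hlt
    have l1 := (dtw_WW s1 z h1 hzne).lower
    have l2 := (dtw_WW s2 z h2 hzne).lower
    have hle := dtw_le hw
    rw [hhd, cond_last] at hi
    have t1 := dd_tri (s1.headD false) (z.headD false) (s2.headD false)
    have t2 := dd_tri (s1.getLastD false) (z.getLastD false) (s2.getLastD false)
    have sy : ∀ a b, dd a b = dd b a := by decide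
    rw [sy (z.headD false)] at t1
    rw [sy (z.getLastD false)] at t2
    omega
  refine ⟨⟨hne, ?_⟩, main, ?_, ?_⟩
  · intro w hw
    have := main w hw
    simpa [Fobj] using this
  · simp [dtw, hz]
  · simp [Fobj, hz]
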